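/- Lemma (from the proof of Theorem 1.1): smooth 3-reflective billiards whose classical borders are supported by lines are right-spherical. Let (a₁,v₁), (a₂,v₂), (a₃,v₃) be a 3-reflective triple of C^∞-smooth line-framed curves in ℝ² with orbit data (Ω, g), such that each image aᵢ(Uᵢ) is contained in a real affine line ℓᵢ, and ℓ₁, ℓ₂, ℓ₃ are pairwise distinct. Then there exist linearly independent vectors p, q, r ∈ ℝ³ and a nonempty open subset Ω′ ⊆ Ω such that for every (s,u) ∈ Ω′, writing t = g(s,u): (a₁(s),1) ∈ span{p,q}, (a₂(u),1) ∈ span{q,r}, (a₃(t),1) ∈ span{r,p}, and r ∈ span{(a₁(s),1),(v₁(s),0)}, p ∈ span{(a₂(u),1),(v₂(u),0)}, q ∈ span{(a₃(t),1),(v₃(t),0)} in ℝ³. -/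

import Mathlib

/-- Two nonzero vectors `u`, `w` of the plane are symmetric with respect to the pair
`(v, τ)` (field direction, tangent direction): there are nonzero scalars `p`, `q` with
`p • u + q • w` on the line spanned by `τ` and `p • u - q • w` on the line spanned by `v`. -/
def PlaneSym (𝕜 : Type*) [Field 𝕜] (v τ u w : 𝕜 × 𝕜) : Prop :=
  ∃ p q : 𝕜, p ≠ 0 ∧ q ≠ 0 ∧ p • u + q • w ∈ Submodule.span 𝕜 {τ} ∧
    p • u - q • w ∈ Submodule.span 𝕜 {v}

/-- Lift of a point of the plane to homogeneous coordinates: `x ↦ (x, 1)`. -/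
def liftPt (𝕜 : Type*) [Field 𝕜] (x : 𝕜 × 𝕜) : 𝕜 × 𝕜 × 𝕜 := (x.1, x.2, 1)

/-- Lift of a direction of the plane to homogeneous coordinates: `x ↦ (x, 0)`. -/
def liftDir (𝕜 : Type*) [Field 𝕜] (x : 𝕜 × 𝕜) : 𝕜 × 𝕜 × 𝕜 := (x.1, x.2, 0)

/-- The affine line through `x` with direction `w`. -/
def lineThru (𝕜 : Type*) [Field 𝕜] (x w : 𝕜 × 𝕜) : Set (𝕜 × 𝕜) :=
  {y | ∃ c : 𝕜, y = x + c • w}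

set_option maxHeartbeats 400000

/-- wedge product in the plane -/
def wdg (u v : ℝ × ℝ) : ℝ := u.1 * v.2 - u.2 * v.1
/-- value of an affine function (covector) at a point -/
def ev (l : ℝ × ℝ × ℝ) (y : ℝ × ℝ) : ℝ := l.1 * y.1 + l.2.1 * y.2 + l.2.2
/-- value of a covector at a direction -/
def evd (l : ℝ × ℝ × ℝ) (y : ℝ × ℝ) : ℝ := l.1 * y.1 + l.2.1 * y.2
/-- covector of a line -/
def cov (x w : ℝ × ℝ) : ℝ × ℝ × ℝ := (-w.2, w.1, w.2 * x.1 - w.1 * x.2)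
/-- cross product -/
def crs (l m : ℝ × ℝ × ℝ) : ℝ × ℝ × ℝ :=
  (l.2.1 * m.2.2 - l.2.2 * m.2.1, l.2.2 * m.1 - l.1 * m.2.2, l.1 * m.2.1 - l.2.1 * m.1)
/-- determinant -/
def dt (l m n : ℝ × ℝ × ℝ) : ℝ :=
  l.1 * (m.2.1 * n.2.2 - m.2.2 * n.2.1) + l.2.1 * (m.2.2 * n.1 - m.1 * n.2.2)
    + l.2.2 * (m.1 * n.2.1 - m.2.1 * n.1)

lemma dt_cyc (l m n : ℝ × ℝ × ℝ) : dt m n l = dt l m n := by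
  simp only [dt]; ring

lemma planeSym_wdg {v τ u w : ℝ × ℝ} (h : PlaneSym ℝ v τ u w) :
    wdg τ u * wdg w v + wdg τ w * wdg u v = 0 := by
  obtain ⟨p, q, hp, hq, h1, h2⟩ := h
  obtain ⟨c, hc⟩ := Submodule.mem_span_singleton.1 h1
  obtain ⟨d, hd⟩ := Submodule.mem_span_singleton.1 h2
  have c1 := congrArg Prod.fst hc
  have c2 := congrArg Prod.snd hc
  have d1 := congrArg Prod.fst hd
  have d2 := congrArg Prod.snd hd
  simp only [Prod.fst_add, Prod.snd_add, Prod.fst_sub, Prod.snd_sub, Prod.smul_fst,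
    Prod.smul_snd, smul_eq_mul] at c1 c2 d1 d2
  have e1 : p * wdg τ u + q * wdg τ w = 0 := by
    simp only [wdg]; linear_combination τ.2 * c1 - τ.1 * c2
  have e2 : p * wdg u v - q * wdg w v = 0 := by
    simp only [wdg]; linear_combination (-v.2) * d1 + v.1 * d2
  have : p * q * (wdg τ u * wdg w v + wdg τ w * wdg u v) = 0 := by
    linear_combination (q * wdg w v) * e1 + (q * wdg τ w) * e2
  exact (mul_eq_zero.1 this).resolve_left (mul_ne_zero hp hq)

lemma par_of_wdg {w v : ℝ × ℝ} (hw : w ≠ 0) (h : wdg w v = 0) : ∃ c : ℝ, v = c • w := by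
  simp only [wdg] at h
  by_cases h1 : w.1 = 0
  · have h2 : w.2 ≠ 0 := fun h2 => hw (Prod.ext h1 h2)
    refine ⟨v.2 / w.2, Prod.ext ?_ ?_⟩
    · simp only [Prod.smul_fst, smul_eq_mul, h1] at *
      simpa [h2] using h
    · simp only [Prod.smul_snd, smul_eq_mul]; field_simp
  · refine ⟨v.1 / w.1, Prod.ext ?_ ?_⟩
    · simp only [Prod.smul_fst, smul_eq_mul]; field_simp
    · simp only [Prod.smul_snd, smul_eq_mul]; field_simp; linarith

lemma curve_facts {U : Set ℝ} {a : ℝ → ℝ × ℝ} {x w : ℝ × ℝ} (hU : IsOpen U)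
    (ha : ContDiffOn ℝ (⊤ : ℕ∞) a U) (ha' : ∀ s ∈ U, deriv a s ≠ 0) (hw : w ≠ 0)
    (hl : ∀ s ∈ U, a s ∈ lineThru ℝ x w) :
    ∀ s ∈ U, ev (cov x w) (a s) = 0 ∧
      (∀ B, B - a s ∉ Submodule.span ℝ {deriv a s} → ev (cov x w) B ≠ 0) ∧
      (∀ v, v ∉ Submodule.span ℝ {deriv a s} → evd (cov x w) v ≠ 0) ∧
      (∀ V B C, PlaneSym ℝ V (deriv a s) (B - a s) (C - a s) →
        ev (cov x w) B * wdg (C - a s) V + ev (cov x w) C * wdg (B - a s) V = 0) := by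
  have h0 : ∀ s ∈ U, ev (cov x w) (a s) = 0 := by
    intro s hs
    obtain ⟨c, hc⟩ := hl s hs
    rw [hc]; simp [ev, cov]; ring
  intro s hs
  have hda : HasDerivAt a (deriv a s) s :=
    ((ha.differentiableOn (by simp)).differentiableAt (hU.mem_nhds hs)).hasDerivAt
  have hwd : wdg w (deriv a s) = 0 := by
    have h1 : HasDerivAt (fun t => (a t).1) (deriv a s).1 s :=
      (ContinuousLinearMap.fst ℝ ℝ ℝ).hasFDerivAt.comp_hasDerivAt s hda
    have h2 : HasDerivAt (fun t => (a t).2) (deriv a s).2 s :=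
      (ContinuousLinearMap.snd ℝ ℝ ℝ).hasFDerivAt.comp_hasDerivAt s hda
    have h3 := ((h1.const_mul (cov x w).1).add (h2.const_mul (cov x w).2.1)).add_const (cov x w).2.2
    have h4 : HasDerivAt (fun t => ev (cov x w) (a t)) 0 s := by
      refine (hasDerivAt_const s (0 : ℝ)).congr_of_eventuallyEq ?_
      filter_upwards [hU.mem_nhds hs] with t ht using h0 t ht
    have := h3.unique h4
    simp only [cov] at this
    simp only [wdg]; linarith
  obtain ⟨k, hk⟩ := par_of_wdg hw hwd
  have hk0 : k ≠ 0 := by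
    rintro rfl; exact ha' s hs (by simpa using hk)
  have hmem : ∀ v, evd (cov x w) v = 0 → v ∈ Submodule.span ℝ {deriv a s} := by
    intro v hv
    obtain ⟨c, hc⟩ := par_of_wdg (v := v) hw (by simp only [evd, cov] at hv; simp only [wdg]; linarith)
    refine Submodule.mem_span_singleton.2 ⟨c / k, ?_⟩
    rw [hk, hc, smul_smul]; field_simp
  have hev : ∀ B, ev (cov x w) B = evd (cov x w) (B - a s) := by
    intro B
    have := h0 s hs
    simp only [ev, evd, Prod.fst_sub, Prod.snd_sub] at *
    linarith
  refine ⟨h0 s hs, ?_, ?_, ?_⟩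
  · intro B hB h
    exact hB (hmem _ (by rw [← hev]; exact h))
  · intro v hv h
    exact hv (hmem _ h)
  · intro V B C h
    have := planeSym_wdg h
    rw [hev, hev]
    have e : ∀ u, wdg (deriv a s) u = k * evd (cov x w) u := by
      intro u; rw [hk]; simp only [wdg, evd, cov, Prod.smul_fst, Prod.smul_snd, smul_eq_mul]; ring
    rw [e, e] at this
    have h2 : k * (evd (cov x w) (B - a s) * wdg (C - a s) V
        + evd (cov x w) (C - a s) * wdg (B - a s) V) = 0 := by linarith
    exact (mul_eq_zero.1 h2).resolve_left hk0

lemma det_id (l m n : ℝ × ℝ × ℝ) (A B V : ℝ × ℝ) : dt l m n * wdg (B - A) V =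
    ev l A * (ev m B * evd n V - ev n B * evd m V) + ev m A * (ev n B * evd l V - ev l B * evd n V)
    + ev n A * (ev l B * evd m V - ev m B * evd l V) := by
  simp only [dt, wdg, ev, evd, Prod.fst_sub, Prod.snd_sub]; ring

lemma tri_eq {l m n : ℝ × ℝ × ℝ} {A B C V : ℝ × ℝ}
    (hA : ev l A = 0) (hB : ev m B = 0) (hC : ev n C = 0)
    (h : ev l B * wdg (C - A) V + ev l C * wdg (B - A) V = 0) :
    2 * ev l B * ev l C * (ev m A * evd n V - ev n A * evd m V)
      = evd l V * (ev m A * ev n B * ev l C - ev n A * ev l B * ev m C) := by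
  have h1 := det_id l m n A B V
  have h2 := det_id l m n A C V
  rw [hA, hB] at h1
  rw [hA, hC] at h2
  linear_combination (-dt l m n) * h + ev l C * h1 + ev l B * h2

lemma inj_id {l m n : ℝ × ℝ × ℝ} {A A' : ℝ × ℝ} (hD : dt l m n ≠ 0)
    (hA : ev l A = 0) (hA' : ev l A' = 0) (h0 : ev m A ≠ 0)
    (h : ev m A * ev n A' = ev n A * ev m A') : A = A' := by
  have key : ∀ A : ℝ × ℝ, ev l A = 0 →
      dt l m n * A.1 = ev m A * (crs n l).1 + ev n A * (crs l m).1 ∧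
      dt l m n * A.2 = ev m A * (crs n l).2.1 + ev n A * (crs l m).2.1 ∧
      dt l m n = ev m A * (crs n l).2.2 + ev n A * (crs l m).2.2 := by
    intro A hA
    simp only [dt, crs, ev] at *
    refine ⟨?_, ?_, ?_⟩
    · linear_combination (m.2.1 * n.2.2 - m.2.2 * n.2.1) * hA
    · linear_combination (m.2.2 * n.1 - m.1 * n.2.2) * hA
    · linear_combination (m.1 * n.2.1 - m.2.1 * n.1) * hA
  obtain ⟨k1, k2, k3⟩ := key A hA
  obtain ⟨k1', k2', k3'⟩ := key A' hA'
  have e : ev m A = ev m A' := by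
    apply mul_left_cancel₀ hD
    linear_combination ev m A * k3' - ev m A' * k3 + (crs l m).2.2 * h
  have e' : ev n A' = ev n A := by
    rw [← e] at h
    apply mul_left_cancel₀ h0
    linarith
  apply Prod.ext
  · apply mul_left_cancel₀ hD; rw [k1, k1', e, e']
  · apply mul_left_cancel₀ hD; rw [k2, k2', e, e']

lemma pt_mem {l m n : ℝ × ℝ × ℝ} {A : ℝ × ℝ} (hD : dt l m n ≠ 0) (hA : ev l A = 0) :
    liftPt ℝ A ∈ Submodule.span ℝ {crs n l, crs l m} := by
  refine Submodule.mem_span_pair.2 ⟨ev m A / dt l m n, ev n A / dt l m n, ?_⟩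
  have hD' := hD
  simp only [liftPt, Prod.ext_iff, Prod.fst_add, Prod.snd_add, Prod.smul_fst, Prod.smul_snd,
    smul_eq_mul]
  refine ⟨?_, ?_, ?_⟩ <;> apply mul_left_cancel₀ hD' <;> field_simp <;>
    simp only [dt, crs, ev] at *
  · linear_combination (-(m.2.1 * n.2.2 - m.2.2 * n.2.1)) * hA
  · linear_combination (-(m.2.2 * n.1 - m.1 * n.2.2)) * hA
  · linear_combination (-(m.1 * n.2.1 - m.2.1 * n.1)) * hA

lemma vert_mem {l m n : ℝ × ℝ × ℝ} {A V : ℝ × ℝ} (hA : ev l A = 0)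
    (h0 : ev m A ≠ 0) (hV : evd l V ≠ 0)
    (h : ev m A * evd n V - ev n A * evd m V = 0) :
    crs m n ∈ Submodule.span ℝ {liftPt ℝ A, liftDir ℝ V} := by
  refine Submodule.mem_span_pair.2
    ⟨-(dt l m n * evd m V) / (ev m A * evd l V), dt l m n / evd l V, ?_⟩
  have hne := mul_ne_zero h0 hV
  simp only [liftPt, liftDir, Prod.ext_iff, Prod.fst_add, Prod.snd_add, Prod.smul_fst,
    Prod.smul_snd, smul_eq_mul]
  have kA : dt l m n * A.1 = ev m A * (crs n l).1 + ev n A * (crs l m).1 ∧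
      dt l m n * A.2 = ev m A * (crs n l).2.1 + ev n A * (crs l m).2.1 ∧
      dt l m n = ev m A * (crs n l).2.2 + ev n A * (crs l m).2.2 := by
    simp only [dt, crs, ev] at *
    refine ⟨?_, ?_, ?_⟩
    · linear_combination (m.2.1 * n.2.2 - m.2.2 * n.2.1) * hA
    · linear_combination (m.2.2 * n.1 - m.1 * n.2.2) * hA
    · linear_combination (m.1 * n.2.1 - m.2.1 * n.1) * hA
  have kV : dt l m n * V.1 = evd l V * (crs m n).1 + evd m V * (crs n l).1 + evd n V * (crs l m).1 ∧
      dt l m n * V.2 = evd l V * (crs m n).2.1 + evd m V * (crs n l).2.1 + evd n V * (crs l m).2.1 ∧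
      0 = evd l V * (crs m n).2.2 + evd m V * (crs n l).2.2 + evd n V * (crs l m).2.2 := by
    simp only [dt, crs, evd]
    refine ⟨?_, ?_, ?_⟩ <;> ring
  obtain ⟨a1, a2, a3⟩ := kA
  obtain ⟨b1, b2, b3⟩ := kV
  refine ⟨?_, ?_, ?_⟩ <;> field_simp
  · linear_combination (-evd m V) * a1 + ev m A * b1 + (crs l m).1 * h
  · linear_combination (-evd m V) * a2 + ev m A * b2 + (crs l m).2.1 * h
  · linear_combination (-evd m V) * a3 + ev m A * b3 + (crs l m).2.2 * h

lemma crs_indep {l m n : ℝ × ℝ × ℝ} (hD : dt l m n ≠ 0) :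
    LinearIndependent ℝ ![crs n l, crs l m, crs m n] := by
  rw [Fintype.linearIndependent_iff]
  intro g hg
  simp only [Fin.sum_univ_three, Matrix.cons_val_zero, Matrix.cons_val_one, Matrix.cons_val,
    Prod.ext_iff, Prod.fst_add, Prod.snd_add, Prod.smul_fst, Prod.smul_snd, smul_eq_mul,
    Prod.fst_zero, Prod.snd_zero] at hg
  obtain ⟨h1, h2, h3⟩ := hg
  have e0 : dt l m n * g 0 = 0 := by
    simp only [dt, crs] at *; linear_combination m.1 * h1 + m.2.1 * h2 + m.2.2 * h3
  have e1 : dt l m n * g 1 = 0 := by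
    simp only [dt, crs] at *; linear_combination n.1 * h1 + n.2.1 * h2 + n.2.2 * h3
  have e2 : dt l m n * g 2 = 0 := by
    simp only [dt, crs] at *; linear_combination l.1 * h1 + l.2.1 * h2 + l.2.2 * h3
  intro i
  fin_cases i
  · exact (mul_eq_zero.1 e0).resolve_left hD
  · exact (mul_eq_zero.1 e1).resolve_left hD
  · exact (mul_eq_zero.1 e2).resolve_left hD

/-- functional equation of the triangle case -/
lemma comb_tri {I J : Set ℝ} {α β m n : ℝ → ℝ} {γ : ℝ → ℝ → ℝ}
    (hα : ∀ s ∈ I, α s ≠ 0) (hβ : ∀ u ∈ J, β u ≠ 0)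
    (hm : ∀ s ∈ I, ∀ u ∈ J, 1 - α s * β u * γ s u = m s * β u)
    (hn : ∀ s ∈ I, ∀ u ∈ J, 1 - α s * β u * γ s u = n u * γ s u)
    {s₁ s₂ u₁ u₂ : ℝ} (hs₁ : s₁ ∈ I) (hs₂ : s₂ ∈ I) (hu₁ : u₁ ∈ J) (hu₂ : u₂ ∈ J)
    (hs : α s₁ ≠ α s₂) (hu : β u₁ ≠ β u₂) : ∀ s ∈ I, m s = 0 := by
  have E : ∀ s ∈ I, ∀ u ∈ J, n u * (1 - m s * β u) = m s * α s * β u ^ 2 := by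
    intro s hs u hu
    have h1 := hm s hs u hu
    have h2 := hn s hs u hu
    linear_combination (n u + α s * β u) * h1 - α s * β u * h2
  intro s hs0
  by_contra hms
  have hnn : ∀ u ∈ J, n u ≠ 0 := by
    intro u hu h
    have := E s hs0 u hu
    rw [h, zero_mul] at this
    exact mul_ne_zero (mul_ne_zero hms (hα s hs0)) (pow_ne_zero 2 (hβ u hu)) this.symm
  have hmm : ∀ s ∈ I, m s ≠ 0 := by
    intro s hs h
    have := E s hs u₁ hu₁
    rw [h] at this
    exact hnn u₁ hu₁ (by linarith)
  have F : ∀ s ∈ I, ∀ u ∈ J, (m s)⁻¹ - β u = α s * (β u ^ 2 / n u) := by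
    intro s hs u hu
    have := E s hs u hu
    have := hnn u hu
    have := hmm s hs
    field_simp
    linarith
  have f11 := F s₁ hs₁ u₁ hu₁
  have f12 := F s₁ hs₁ u₂ hu₂
  have f21 := F s₂ hs₂ u₁ hu₁
  have f22 := F s₂ hs₂ u₂ hu₂
  have r : β u₁ ^ 2 / n u₁ = β u₂ ^ 2 / n u₂ := by
    apply mul_left_cancel₀ (sub_ne_zero.2 hs)
    linear_combination (-f11) + f12 + f21 - f22
  rw [r] at f11
  exact hu (by linarith)

lemma ivt_pair {I J : Set ℝ} {f g : ℝ → ℝ} (hI : IsPreconnected I) (hJ : IsPreconnected J)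
    (hf : ContinuousOn f I) (hg : ContinuousOn g J)
    {s₁ s₂ u₁ u₂ : ℝ} (hs₁ : s₁ ∈ I) (hs₂ : s₂ ∈ I) (hu₁ : u₁ ∈ J) (hu₂ : u₂ ∈ J)
    (hs : f s₁ ≠ f s₂) (hu : g u₁ ≠ g u₂) :
    ∃ s ∈ I, ∃ s' ∈ I, ∃ u ∈ J, ∃ u' ∈ J, f s - g u = f s' - g u' ∧ f s + g u ≠ f s' + g u' := by
  wlog h1 : f s₁ < f s₂ generalizing s₁ s₂
  · exact this hs₂ hs₁ hs.symm (lt_of_le_of_ne (not_lt.1 h1) hs.symm)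
  wlog h2 : g u₁ < g u₂ generalizing u₁ u₂
  · exact this hu₂ hu₁ hu.symm (lt_of_le_of_ne (not_lt.1 h2) hu.symm)
  set δ := min (f s₂ - f s₁) (g u₂ - g u₁) with hδ
  have d0 : 0 < δ := lt_min (by linarith) (by linarith)
  have d1 : δ ≤ f s₂ - f s₁ := min_le_left _ _
  have d2 : δ ≤ g u₂ - g u₁ := min_le_right _ _
  obtain ⟨s', hs', e1⟩ := hI.intermediate_value hs₁ hs₂ hf
    (show f s₁ + δ ∈ Set.Icc _ _ from ⟨by linarith, by linarith⟩)
  obtain ⟨u', hu', e2⟩ := hJ.intermediate_value hu₁ hu₂ hg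
    (show g u₁ + δ ∈ Set.Icc _ _ from ⟨by linarith, by linarith⟩)
  refine ⟨s₁, hs₁, s', hs', u₁, hu₁, u', hu', by linarith, ?_⟩
  intro h; linarith

lemma conc_eqA {l m n θ : ℝ × ℝ × ℝ} {A B C V : ℝ × ℝ}
    (hsum : ∀ y, ev l y + ev m y + ev n y = 0)
    (hA : ev l A = 0) (hB : ev m B = 0) (hC : ev n C = 0)
    (h : ev l B * wdg (C - A) V + ev l C * wdg (B - A) V = 0) :
    2 * ev l B * ev l C * (ev m A * evd θ V - ev θ A * evd m V)
      = evd l V * (ev l B * ev m A * ev θ C + ev l B * ev l C * ev θ A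
        + ev l C * ev m A * ev θ B) := by
  have h1 := det_id l m θ A B V
  have h2 := det_id l m θ A C V
  have h3 := hsum C
  rw [hA, hB] at h1
  have h4 : ev m C = - ev l C := by linarith
  rw [hA, h4] at h2
  linear_combination (-dt l m θ) * h + ev l C * h1 + ev l B * h2

lemma conc_eqC {l m n θ : ℝ × ℝ × ℝ} {A B C V : ℝ × ℝ}
    (hsum : ∀ y, ev l y + ev m y + ev n y = 0)
    (hA : ev l A = 0) (hB : ev m B = 0) (hC : ev n C = 0)
    (h : ev n A * wdg (B - C) V + ev n B * wdg (A - C) V = 0) :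
    2 * ev l C * ev m A * ev l B * evd θ V
      - ev l C * (evd l V + evd m V) * (ev m A * ev θ B + ev l B * ev θ A)
      + ev θ C * (evd m V - evd l V) * ev m A * ev l B = 0 := by
  have h1 := det_id l m θ C B V
  have h2 := det_id l m θ C A V
  have h3 : ev m C = - ev l C := by linarith [hsum C]
  have h4 : ev n A = - ev m A := by linarith [hsum A]
  have h5 : ev n B = - ev l B := by linarith [hsum B]
  rw [hB, h3] at h1
  rw [hA, h3] at h2
  rw [h4, h5] at h
  linear_combination (-dt l m θ) * h - ev m A * h1 - ev l B * h2

lemma ev_smul (c : ℝ) (l : ℝ × ℝ × ℝ) (y : ℝ × ℝ) : ev (c • l) y = c * ev l y := by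
  simp only [ev, Prod.smul_fst, Prod.smul_snd, smul_eq_mul]; ring

lemma evd_smul (c : ℝ) (l : ℝ × ℝ × ℝ) (y : ℝ × ℝ) : evd (c • l) y = c * evd l y := by
  simp only [evd, Prod.smul_fst, Prod.smul_snd, smul_eq_mul]; ring

lemma exists_kappa {l m n : ℝ × ℝ × ℝ} {A B : ℝ × ℝ} (hD : dt l m n = 0)
    (hA : ev l A = 0) (hB : ev m B = 0) (hmA : ev m A ≠ 0) (hnA : ev n A ≠ 0)
    (hlB : ev l B ≠ 0) (hnB : ev n B ≠ 0) :
    ∃ c d : ℝ, c ≠ 0 ∧ d ≠ 0 ∧ c • l + d • m + n = 0 := by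
  refine ⟨-ev n B / ev l B, -ev n A / ev m A, div_ne_zero (neg_ne_zero.2 hnB) hlB,
    div_ne_zero (neg_ne_zero.2 hnA) hmA, ?_⟩
  set c := -ev n B / ev l B with hc
  set d := -ev n A / ev m A with hd
  have h1 : c * ev l B + ev n B = 0 := by rw [hc]; field_simp; ring
  have h2 : d * ev m A + ev n A = 0 := by rw [hd]; field_simp; ring
  obtain ⟨l1, l2, l3⟩ := l
  obtain ⟨m1, m2, m3⟩ := m
  obtain ⟨n1, n2, n3⟩ := n
  obtain ⟨A1, A2⟩ := A
  obtain ⟨B1, B2⟩ := B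
  have hne := mul_ne_zero hmA hlB
  clear_value c d
  simp only [ev, dt] at *
  -- the covector vanishes at `A`, at `B` and at the common point of the lines
  have pA : (c * l1 + d * m1 + n1) * A1 + (c * l2 + d * m2 + n2) * A2 + (c * l3 + d * m3 + n3) = 0 := by
    linear_combination h2 + c * hA
  have pB : (c * l1 + d * m1 + n1) * B1 + (c * l2 + d * m2 + n2) * B2 + (c * l3 + d * m3 + n3) = 0 := by
    linear_combination h1 + d * hB
  have pO : (c * l1 + d * m1 + n1) * (l2 * m3 - l3 * m2) + (c * l2 + d * m2 + n2) * (l3 * m1 - l1 * m3)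
      + (c * l3 + d * m3 + n3) * (l1 * m2 - l2 * m1) = 0 := by
    linear_combination hD
  have e1 : c * l1 + d * m1 + n1 = 0 := by
    generalize c * l1 + d * m1 + n1 = p at *
    generalize c * l2 + d * m2 + n2 = q at *
    generalize c * l3 + d * m3 + n3 = r at *
    apply mul_left_cancel₀ hne
    linear_combination (-(B2 * (l1 * m2 - l2 * m1) - (l3 * m1 - l1 * m3))) * pA
      + (A2 * (l1 * m2 - l2 * m1) - (l3 * m1 - l1 * m3)) * pB - (A2 - B2) * pO
      + (m1 * B1 + m2 * B2 + m3) * p * hA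
  have e2 : c * l2 + d * m2 + n2 = 0 := by
    generalize c * l1 + d * m1 + n1 = p at *
    generalize c * l2 + d * m2 + n2 = q at *
    generalize c * l3 + d * m3 + n3 = r at *
    apply mul_left_cancel₀ hne
    linear_combination (B1 * (l1 * m2 - l2 * m1) - (l2 * m3 - l3 * m2)) * pA
      - (A1 * (l1 * m2 - l2 * m1) - (l2 * m3 - l3 * m2)) * pB + (A1 - B1) * pO
      + (m1 * B1 + m2 * B2 + m3) * q * hA
  have e3 : c * l3 + d * m3 + n3 = 0 := by
    rw [e1, e2] at pA
    linarith
  simp [e1, e2, e3]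


lemma ev_contOn {l : ℝ × ℝ × ℝ} {a : ℝ → ℝ × ℝ} {I : Set ℝ} (ha : ContinuousOn a I) :
    ContinuousOn (fun s => ev l (a s)) I := by
  unfold ev; fun_prop

/-- the three lines cannot be concurrent -/
lemma concurrent_false {I J U₃ : Set ℝ} {l m n : ℝ × ℝ × ℝ} {a₁ a₂ a₃ v₁ v₂ v₃ : ℝ → ℝ × ℝ}
    {g : ℝ × ℝ → ℝ} (hI : IsPreconnected I) (hJ : IsPreconnected J)
    (ha₁ : ContinuousOn a₁ I) (ha₂ : ContinuousOn a₂ J) (ha₃i : Set.InjOn a₃ U₃)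
    (hGU : ∀ s ∈ I, ∀ u ∈ J, g (s, u) ∈ U₃) (hsum : l + m + n = 0)
    (lA : ∀ s ∈ I, ev l (a₁ s) = 0) (mB : ∀ u ∈ J, ev m (a₂ u) = 0)
    (nC : ∀ s ∈ I, ∀ u ∈ J, ev n (a₃ (g (s, u))) = 0)
    (lB : ∀ u ∈ J, ev l (a₂ u) ≠ 0) (lC : ∀ s ∈ I, ∀ u ∈ J, ev l (a₃ (g (s, u))) ≠ 0)
    (mA : ∀ s ∈ I, ev m (a₁ s) ≠ 0)
    (lV : ∀ s ∈ I, evd l (v₁ s) ≠ 0) (mV : ∀ u ∈ J, evd m (v₂ u) ≠ 0)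
    (nV : ∀ s ∈ I, ∀ u ∈ J, evd n (v₃ (g (s, u))) ≠ 0)
    (r₁ : ∀ s ∈ I, ∀ u ∈ J, ev l (a₂ u) * wdg (a₃ (g (s, u)) - a₁ s) (v₁ s)
      + ev l (a₃ (g (s, u))) * wdg (a₂ u - a₁ s) (v₁ s) = 0)
    (r₂ : ∀ s ∈ I, ∀ u ∈ J, ev m (a₁ s) * wdg (a₃ (g (s, u)) - a₂ u) (v₂ u)
      + ev m (a₃ (g (s, u))) * wdg (a₁ s - a₂ u) (v₂ u) = 0)
    (r₃ : ∀ s ∈ I, ∀ u ∈ J,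
      ev n (a₁ s) * wdg (a₂ u - a₃ (g (s, u))) (v₃ (g (s, u)))
      + ev n (a₂ u) * wdg (a₁ s - a₃ (g (s, u))) (v₃ (g (s, u))) = 0)
    {s₀ s₁ u₀ u₁ : ℝ} (hs₀ : s₀ ∈ I) (hs₁ : s₁ ∈ I) (hu₀ : u₀ ∈ J) (hu₁ : u₁ ∈ J)
    (hA₀₁ : a₁ s₀ ≠ a₁ s₁) (hB₀₁ : a₂ u₀ ≠ a₂ u₁) : False := by
  have hs : ∀ y, ev l y + ev m y + ev n y = 0 := by
    intro y
    have h1 := congrArg Prod.fst hsum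
    have h2 := congrArg (fun p => p.2.1) hsum
    have h3 := congrArg (fun p => p.2.2) hsum
    simp only [Prod.fst_add, Prod.snd_add, Prod.fst_zero, Prod.snd_zero] at h1 h2 h3
    simp only [ev]
    linear_combination y.1 * h1 + y.2 * h2 + h3
  have hsd : ∀ y, evd l y + evd m y + evd n y = 0 := by
    intro y
    have h1 := congrArg Prod.fst hsum
    have h2 := congrArg (fun p => p.2.1) hsum
    simp only [Prod.fst_add, Prod.snd_add, Prod.fst_zero, Prod.snd_zero] at h1 h2
    simp only [evd]
    linear_combination y.1 * h1 + y.2 * h2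
  have hs' : ∀ y, ev m y + ev l y + ev n y = 0 := fun y => by linarith [hs y]
  obtain ⟨θ, hθ⟩ : ∃ θ, dt l m θ ≠ 0 := by
    refine ⟨crs l m, fun h => ?_⟩
    have e : dt l m (crs l m) = (crs l m).1 ^ 2 + (crs l m).2.1 ^ 2 + (crs l m).2.2 ^ 2 := by
      simp only [dt, crs]; ring
    rw [e] at h
    have h1 : (crs l m).1 = 0 := by nlinarith [sq_nonneg (crs l m).1, sq_nonneg (crs l m).2.1, sq_nonneg (crs l m).2.2]
    have h2 : (crs l m).2.1 = 0 := by nlinarith [sq_nonneg (crs l m).1, sq_nonneg (crs l m).2.1, sq_nonneg (crs l m).2.2]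
    have h3 : (crs l m).2.2 = 0 := by nlinarith [sq_nonneg (crs l m).1, sq_nonneg (crs l m).2.1, sq_nonneg (crs l m).2.2]
    have k := mul_ne_zero (mA s₀ hs₀) (lB u₀ hu₀)
    have ka := lA s₀ hs₀
    apply k
    simp only [crs] at h1 h2 h3
    simp only [ev] at *
    generalize a₁ s₀ = A at *
    generalize a₂ u₀ = B at *
    linear_combination (B.2 - A.2) * h1 - (B.1 - A.1) * h2
      + (-A.1 * B.2 + A.2 * B.1) * h3 + (m.1 * B.1 + m.2.1 * B.2 + m.2.2) * ka
  have hθ2 : dt m l θ ≠ 0 := by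
    intro h; apply hθ; simp only [dt] at *; linarith
  have hθ3 : dt n l θ ≠ 0 := by
    have h1 := congrArg Prod.fst hsum
    have h2 := congrArg (fun p => p.2.1) hsum
    have h3 := congrArg (fun p => p.2.2) hsum
    simp only [Prod.fst_add, Prod.snd_add, Prod.fst_zero, Prod.snd_zero] at h1 h2 h3
    intro h; apply hθ; simp only [dt] at *
    linear_combination h - (l.2.1 * θ.2.2 - l.2.2 * θ.2.1) * h1 - (l.2.2 * θ.1 - l.1 * θ.2.2) * h2
      - (l.1 * θ.2.1 - l.2.1 * θ.1) * h3
  set x : ℝ → ℝ := fun s => ev θ (a₁ s) / ev m (a₁ s) with hx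
  set y : ℝ → ℝ := fun u => ev θ (a₂ u) / ev l (a₂ u) with hy
  set z : ℝ → ℝ := fun t => ev θ (a₃ t) / ev l (a₃ t) with hz
  have q₁ : ∃ M : ℝ → ℝ, ∀ s ∈ I, ∀ u ∈ J, x s + y u + z (g (s, u)) = M s := by
    refine ⟨fun s => 2 * (ev m (a₁ s) * evd θ (v₁ s) - ev θ (a₁ s) * evd m (v₁ s))
        / (evd l (v₁ s) * ev m (a₁ s)), fun s hs1 u hu => ?_⟩
    have := conc_eqA (θ := θ) hs (lA s hs1) (mB u hu) (nC s hs1 u hu) (r₁ s hs1 u hu)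
    have := mA s hs1
    have := lB u hu
    have := lC s hs1 u hu
    have := lV s hs1
    simp only [hx, hy, hz]
    field_simp
    linarith
  have q₂ : ∃ N : ℝ → ℝ, ∀ s ∈ I, ∀ u ∈ J, x s + y u - z (g (s, u)) = N u := by
    refine ⟨fun u => 2 * (ev l (a₂ u) * evd θ (v₂ u) - ev θ (a₂ u) * evd l (v₂ u))
        / (evd m (v₂ u) * ev l (a₂ u)), fun s hs1 u hu => ?_⟩
    have h := conc_eqA (θ := θ) hs' (mB u hu) (lA s hs1) (nC s hs1 u hu) (r₂ s hs1 u hu)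
    have e : ev m (a₃ (g (s, u))) = - ev l (a₃ (g (s, u))) := by
      linarith [hs (a₃ (g (s, u))), nC s hs1 u hu]
    rw [e] at h
    have := mA s hs1
    have := lB u hu
    have := lC s hs1 u hu
    have := mV u hu
    simp only [hx, hy, hz]
    field_simp
    linarith
  have q₃ : ∃ K : ℝ → ℝ, ∀ s ∈ I, ∀ u ∈ J, x s + y u = K (g (s, u)) := by
    refine ⟨fun t => (2 * evd θ (v₃ t) + z t * (evd m (v₃ t) - evd l (v₃ t))) / (- evd n (v₃ t)),
      fun s hs1 u hu => ?_⟩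
    have h := conc_eqC (θ := θ) hs (lA s hs1) (mB u hu) (nC s hs1 u hu) (r₃ s hs1 u hu)
    have e : evd l (v₃ (g (s, u))) + evd m (v₃ (g (s, u))) = - evd n (v₃ (g (s, u))) := by
      linarith [hsd (v₃ (g (s, u)))]
    rw [e] at h
    have := mA s hs1
    have := lB u hu
    have := lC s hs1 u hu
    have := nV s hs1 u hu
    simp only [hx, hy, hz]
    field_simp
    linarith
  obtain ⟨M, q₁⟩ := q₁
  obtain ⟨N, q₂⟩ := q₂
  obtain ⟨K, q₃⟩ := q₃
  have hx01 : x s₀ ≠ x s₁ := by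
    intro h
    simp only [hx] at h
    rw [div_eq_div_iff (mA _ hs₀) (mA _ hs₁)] at h
    exact hA₀₁ (inj_id hθ (lA s₀ hs₀) (lA s₁ hs₁) (mA s₀ hs₀) (by linarith))
  have hy01 : y u₀ ≠ y u₁ := by
    intro h
    simp only [hy] at h
    rw [div_eq_div_iff (lB _ hu₀) (lB _ hu₁)] at h
    exact hB₀₁ (inj_id hθ2 (mB u₀ hu₀) (mB u₁ hu₁) (lB u₀ hu₀) (by linarith))
  have hxc : ContinuousOn x I := (ev_contOn ha₁).div (ev_contOn ha₁) mA
  have hyc : ContinuousOn y J := (ev_contOn ha₂).div (ev_contOn ha₂) lB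
  obtain ⟨s, hs1, s', hs1', u, hu, u', hu', e1, e2⟩ :=
    ivt_pair hI hJ hxc hyc hs₀ hs₁ hu₀ hu₁ hx01 hy01
  have hzz : z (g (s, u)) = z (g (s', u')) := by
    have b1 := q₁ s hs1 u hu
    have b2 := q₁ s' hs1' u' hu'
    have b3 := q₂ s hs1 u hu
    have b4 := q₂ s' hs1' u' hu'
    have b5 := q₁ s hs1 u' hu'
    have b6 := q₂ s hs1 u' hu'
    linarith
  have hCC : a₃ (g (s, u)) = a₃ (g (s', u')) := by
    simp only [hz] at hzz
    rw [div_eq_div_iff (lC _ hs1 _ hu) (lC _ hs1' _ hu')] at hzz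
    exact inj_id hθ3 (nC s hs1 u hu) (nC s' hs1' u' hu') (lC s hs1 u hu) (by linarith)
  have hgg := ha₃i (hGU _ hs1 _ hu) (hGU _ hs1' _ hu') hCC
  apply e2
  rw [q₃ s hs1 u hu, q₃ s' hs1' u' hu', hgg]

lemma exists_rect {Ω : Set (ℝ × ℝ)} (hΩo : IsOpen Ω) (hΩne : Ω.Nonempty) :
    ∃ I J : Set ℝ, IsOpen I ∧ IsOpen J ∧ IsPreconnected I ∧ IsPreconnected J ∧ I ×ˢ J ⊆ Ω ∧
      ∃ s₀ ∈ I, ∃ s₁ ∈ I, s₀ ≠ s₁ ∧ ∃ u₀ ∈ J, ∃ u₁ ∈ J, u₀ ≠ u₁ := by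
  obtain ⟨⟨s₀, u₀⟩, hz₀⟩ := hΩne
  obtain ⟨ε, hε, hball⟩ := Metric.isOpen_iff.1 hΩo _ hz₀
  rw [← ball_prod_same] at hball
  set I := Metric.ball s₀ ε with hI
  set J := Metric.ball u₀ ε with hJ
  have hs₀ : s₀ ∈ I := Metric.mem_ball_self hε
  have hu₀ : u₀ ∈ J := Metric.mem_ball_self hε
  obtain ⟨s₁, hs₁, hs₀₁⟩ : ∃ s₁ ∈ I, s₀ ≠ s₁ :=
    ⟨s₀ + ε / 2, by rw [hI, Metric.mem_ball, Real.dist_eq, add_sub_cancel_left, abs_of_pos] <;> linarith,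
      by linarith⟩
  obtain ⟨u₁, hu₁, hu₀₁⟩ : ∃ u₁ ∈ J, u₀ ≠ u₁ :=
    ⟨u₀ + ε / 2, by rw [hJ, Metric.mem_ball, Real.dist_eq, add_sub_cancel_left, abs_of_pos] <;> linarith,
      by linarith⟩
  exact ⟨I, J, Metric.isOpen_ball, Metric.isOpen_ball, (convex_ball _ _).isPreconnected,
    (convex_ball _ _).isPreconnected, hball, s₀, hs₀, s₁, hs₁, hs₀₁, u₀, hu₀, u₁, hu₁, hu₀₁⟩

/-- **Lemma from the proof of Theorem 1.1.** A 3-reflective triple of `C^∞`-smooth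
line-framed curves in `ℝ²` whose classical borders are supported by pairwise distinct
lines is right-spherical near its orbits. -/
theorem smooth_three_reflective_on_lines_is_right_spherical
    (U₁ U₂ U₃ : Set ℝ) (a₁ a₂ a₃ v₁ v₂ v₃ : ℝ → ℝ × ℝ)
    (hU₁o : IsOpen U₁) (hU₂o : IsOpen U₂) (hU₃o : IsOpen U₃)
    (hU₁c : IsConnected U₁) (hU₂c : IsConnected U₂) (hU₃c : IsConnected U₃)
    -- the `(aᵢ, vᵢ)` are smooth line-framed curves
    (ha₁ : ContDiffOn ℝ (⊤ : ℕ∞) a₁ U₁) (ha₂ : ContDiffOn ℝ (⊤ : ℕ∞) a₂ U₂)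
    (ha₃ : ContDiffOn ℝ (⊤ : ℕ∞) a₃ U₃)
    (ha₁i : Set.InjOn a₁ U₁) (ha₂i : Set.InjOn a₂ U₂) (ha₃i : Set.InjOn a₃ U₃)
    (ha₁' : ∀ s ∈ U₁, deriv a₁ s ≠ 0) (ha₂' : ∀ u ∈ U₂, deriv a₂ u ≠ 0)
    (ha₃' : ∀ t ∈ U₃, deriv a₃ t ≠ 0)
    (hv₁ : ContDiffOn ℝ (⊤ : ℕ∞) v₁ U₁) (hv₂ : ContDiffOn ℝ (⊤ : ℕ∞) v₂ U₂)
    (hv₃ : ContDiffOn ℝ (⊤ : ℕ∞) v₃ U₃)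
    (hv₁t : ∀ s ∈ U₁, v₁ s ∉ Submodule.span ℝ {deriv a₁ s})
    (hv₂t : ∀ u ∈ U₂, v₂ u ∉ Submodule.span ℝ {deriv a₂ u})
    (hv₃t : ∀ t ∈ U₃, v₃ t ∉ Submodule.span ℝ {deriv a₃ t})
    -- the classical borders are supported by pairwise distinct lines ℓ₁, ℓ₂, ℓ₃
    (x₁ w₁ x₂ w₂ x₃ w₃ : ℝ × ℝ)
    (hw₁ : w₁ ≠ 0) (hw₂ : w₂ ≠ 0) (hw₃ : w₃ ≠ 0)
    (hl₁ : ∀ s ∈ U₁, a₁ s ∈ lineThru ℝ x₁ w₁)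
    (hl₂ : ∀ u ∈ U₂, a₂ u ∈ lineThru ℝ x₂ w₂)
    (hl₃ : ∀ t ∈ U₃, a₃ t ∈ lineThru ℝ x₃ w₃)
    (hl₁₂ : lineThru ℝ x₁ w₁ ≠ lineThru ℝ x₂ w₂)
    (hl₂₃ : lineThru ℝ x₂ w₂ ≠ lineThru ℝ x₃ w₃)
    (hl₃₁ : lineThru ℝ x₃ w₃ ≠ lineThru ℝ x₁ w₁)
    -- 3-reflectivity data (Ω, g)
    (Ω : Set (ℝ × ℝ)) (g : ℝ × ℝ → ℝ)
    (hΩo : IsOpen Ω) (hΩne : Ω.Nonempty) (hΩ : Ω ⊆ U₁ ×ˢ U₂)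
    (hg : ContinuousOn g Ω) (hgm : ∀ z ∈ Ω, g z ∈ U₃)
    (hcol : ∀ z ∈ Ω, ¬ Collinear ℝ {a₁ z.1, a₂ z.2, a₃ (g z)})
    (htan₁ : ∀ z ∈ Ω, a₂ z.2 - a₁ z.1 ∉ Submodule.span ℝ {deriv a₁ z.1} ∧
      a₃ (g z) - a₁ z.1 ∉ Submodule.span ℝ {deriv a₁ z.1})
    (htan₂ : ∀ z ∈ Ω, a₁ z.1 - a₂ z.2 ∉ Submodule.span ℝ {deriv a₂ z.2} ∧
      a₃ (g z) - a₂ z.2 ∉ Submodule.span ℝ {deriv a₂ z.2})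
    (htan₃ : ∀ z ∈ Ω, a₁ z.1 - a₃ (g z) ∉ Submodule.span ℝ {deriv a₃ (g z)} ∧
      a₂ z.2 - a₃ (g z) ∉ Submodule.span ℝ {deriv a₃ (g z)})
    (href₁ : ∀ z ∈ Ω,
      PlaneSym ℝ (v₁ z.1) (deriv a₁ z.1) (a₂ z.2 - a₁ z.1) (a₃ (g z) - a₁ z.1))
    (href₂ : ∀ z ∈ Ω,
      PlaneSym ℝ (v₂ z.2) (deriv a₂ z.2) (a₁ z.1 - a₂ z.2) (a₃ (g z) - a₂ z.2))
    (href₃ : ∀ z ∈ Ω,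
      PlaneSym ℝ (v₃ (g z)) (deriv a₃ (g z)) (a₁ z.1 - a₃ (g z)) (a₂ z.2 - a₃ (g z))) :
    ∃ P Q R : ℝ × ℝ × ℝ, LinearIndependent ℝ ![P, Q, R] ∧
      ∃ Ω' : Set (ℝ × ℝ), Ω' ⊆ Ω ∧ Ω'.Nonempty ∧ IsOpen Ω' ∧
        ∀ z ∈ Ω',
          liftPt ℝ (a₁ z.1) ∈ Submodule.span ℝ {P, Q} ∧
          liftPt ℝ (a₂ z.2) ∈ Submodule.span ℝ {Q, R} ∧
          liftPt ℝ (a₃ (g z)) ∈ Submodule.span ℝ {R, P} ∧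
          R ∈ Submodule.span ℝ {liftPt ℝ (a₁ z.1), liftDir ℝ (v₁ z.1)} ∧
          P ∈ Submodule.span ℝ {liftPt ℝ (a₂ z.2), liftDir ℝ (v₂ z.2)} ∧
          Q ∈ Submodule.span ℝ {liftPt ℝ (a₃ (g z)), liftDir ℝ (v₃ (g z))} := by
  
  have f₁ := curve_facts hU₁o ha₁ ha₁' hw₁ hl₁
  have f₂ := curve_facts hU₂o ha₂ ha₂' hw₂ hl₂
  have f₃ := curve_facts hU₃o ha₃ ha₃' hw₃ hl₃
  generalize cov x₁ w₁ = l at f₁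
  generalize cov x₂ w₂ = m at f₂
  generalize cov x₃ w₃ = n at f₃
  obtain ⟨I, J, hIo, hJo, hIp, hJp, hball, s₀, hs₀, s₁, hs₁, hs₀₁, u₀, hu₀, u₁, hu₁, hu₀₁⟩ :=
    exists_rect hΩo hΩne
  have hIJ : ∀ s ∈ I, ∀ u ∈ J, (s, u) ∈ Ω := fun s hs u hu => hball ⟨hs, hu⟩
  have hIU : ∀ s ∈ I, s ∈ U₁ := fun s hs => (hΩ (hIJ s hs u₀ hu₀)).1
  have hJU : ∀ u ∈ J, u ∈ U₂ := fun u hu => (hΩ (hIJ s₀ hs₀ u hu)).2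
  have hGU : ∀ s ∈ I, ∀ u ∈ J, g (s, u) ∈ U₃ := fun s hs u hu => hgm _ (hIJ s hs u hu)
  have lA : ∀ s ∈ I, ev l (a₁ s) = 0 := fun s hs => (f₁ s (hIU s hs)).1
  have mB : ∀ u ∈ J, ev m (a₂ u) = 0 := fun u hu => (f₂ u (hJU u hu)).1
  have nC : ∀ s ∈ I, ∀ u ∈ J, ev n (a₃ (g (s, u))) = 0 := fun s hs u hu => (f₃ _ (hGU s hs u hu)).1
  have lB : ∀ u ∈ J, ev l (a₂ u) ≠ 0 := fun u hu =>
    (f₁ s₀ (hIU s₀ hs₀)).2.1 _ (htan₁ _ (hIJ s₀ hs₀ u hu)).1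
  have lC : ∀ s ∈ I, ∀ u ∈ J, ev l (a₃ (g (s, u))) ≠ 0 := fun s hs u hu =>
    (f₁ s (hIU s hs)).2.1 _ (htan₁ _ (hIJ s hs u hu)).2
  have mA : ∀ s ∈ I, ev m (a₁ s) ≠ 0 := fun s hs =>
    (f₂ u₀ (hJU u₀ hu₀)).2.1 _ (htan₂ _ (hIJ s hs u₀ hu₀)).1
  have mC : ∀ s ∈ I, ∀ u ∈ J, ev m (a₃ (g (s, u))) ≠ 0 := fun s hs u hu =>
    (f₂ u (hJU u hu)).2.1 _ (htan₂ _ (hIJ s hs u hu)).2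
  have nA : ∀ s ∈ I, ev n (a₁ s) ≠ 0 := fun s hs =>
    (f₃ _ (hGU s hs u₀ hu₀)).2.1 _ (htan₃ _ (hIJ s hs u₀ hu₀)).1
  have nB : ∀ u ∈ J, ev n (a₂ u) ≠ 0 := fun u hu =>
    (f₃ _ (hGU s₀ hs₀ u hu)).2.1 _ (htan₃ _ (hIJ s₀ hs₀ u hu)).2
  have lV : ∀ s ∈ I, evd l (v₁ s) ≠ 0 := fun s hs =>
    (f₁ s (hIU s hs)).2.2.1 _ (hv₁t s (hIU s hs))
  have mV : ∀ u ∈ J, evd m (v₂ u) ≠ 0 := fun u hu =>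
    (f₂ u (hJU u hu)).2.2.1 _ (hv₂t u (hJU u hu))
  have nV : ∀ s ∈ I, ∀ u ∈ J, evd n (v₃ (g (s, u))) ≠ 0 := fun s hs u hu =>
    (f₃ _ (hGU s hs u hu)).2.2.1 _ (hv₃t _ (hGU s hs u hu))
  have r₁ : ∀ s ∈ I, ∀ u ∈ J, ev l (a₂ u) * wdg (a₃ (g (s, u)) - a₁ s) (v₁ s)
      + ev l (a₃ (g (s, u))) * wdg (a₂ u - a₁ s) (v₁ s) = 0 := fun s hs u hu =>
    (f₁ s (hIU s hs)).2.2.2 (v₁ s) (a₂ u) (a₃ (g (s, u))) (href₁ (s, u) (hIJ s hs u hu))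
  have r₂ : ∀ s ∈ I, ∀ u ∈ J, ev m (a₁ s) * wdg (a₃ (g (s, u)) - a₂ u) (v₂ u)
      + ev m (a₃ (g (s, u))) * wdg (a₁ s - a₂ u) (v₂ u) = 0 := fun s hs u hu =>
    (f₂ u (hJU u hu)).2.2.2 (v₂ u) (a₁ s) (a₃ (g (s, u))) (href₂ (s, u) (hIJ s hs u hu))
  have r₃ : ∀ s ∈ I, ∀ u ∈ J,
      ev n (a₁ s) * wdg (a₂ u - a₃ (g (s, u))) (v₃ (g (s, u)))
      + ev n (a₂ u) * wdg (a₁ s - a₃ (g (s, u))) (v₃ (g (s, u))) = 0 := fun s hs u hu =>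
    (f₃ _ (hGU s hs u hu)).2.2.2 (v₃ (g (s, u))) (a₁ s) (a₂ u) (href₃ (s, u) (hIJ s hs u hu))
  have hA₀₁ : a₁ s₀ ≠ a₁ s₁ := fun h => hs₀₁ (ha₁i (hIU _ hs₀) (hIU _ hs₁) h)
  have hB₀₁ : a₂ u₀ ≠ a₂ u₁ := fun h => hu₀₁ (ha₂i (hJU _ hu₀) (hJU _ hu₁) h)
  by_cases hD : dt l m n = 0
  · -- concurrent lines: impossible
    exfalso
    obtain ⟨c, d, hc, hd, hcd⟩ := exists_kappa hD (lA s₀ hs₀) (mB u₀ hu₀) (mA s₀ hs₀) (nA s₀ hs₀)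
      (lB u₀ hu₀) (nB u₀ hu₀)
    refine concurrent_false (I := I) (J := J) (l := c • l) (m := d • m) (n := n) (a₁ := a₁) (a₂ := a₂)
      (a₃ := a₃) (v₁ := v₁) (v₂ := v₂) (v₃ := v₃) (g := g) (U₃ := U₃)
      hIp hJp
      (ha₁.continuousOn.mono hIU) (ha₂.continuousOn.mono hJU) ha₃i hGU hcd
      ?_ ?_ nC ?_ ?_ ?_ ?_ ?_ nV ?_ ?_ r₃ hs₀ hs₁ hu₀ hu₁ hA₀₁ hB₀₁
    · intro s hs; rw [ev_smul, lA s hs, mul_zero]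
    · intro s hs; rw [ev_smul, mB s hs, mul_zero]
    · intro u hu; rw [ev_smul]; exact mul_ne_zero hc (lB u hu)
    · intro s hs u hu; rw [ev_smul]; exact mul_ne_zero hc (lC s hs u hu)
    · intro s hs; rw [ev_smul]; exact mul_ne_zero hd (mA s hs)
    · intro s hs; rw [evd_smul]; exact mul_ne_zero hc (lV s hs)
    · intro s hs; rw [evd_smul]; exact mul_ne_zero hd (mV s hs)
    · intro s hs u hu; rw [ev_smul, ev_smul]; linear_combination c * r₁ s hs u hu
    · intro s hs u hu; rw [ev_smul, ev_smul]; linear_combination d * r₂ s hs u hu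
  · have hD2 : dt m n l ≠ 0 := by rwa [dt_cyc]
    have hD3 : dt n l m ≠ 0 := by rwa [dt_cyc]
    have t₁ : ∀ s ∈ I, ∀ u ∈ J,
      2 * ev l (a₂ u) * ev l (a₃ (g (s, u))) * (ev m (a₁ s) * evd n (v₁ s) - ev n (a₁ s) * evd m (v₁ s))
      = evd l (v₁ s) * (ev m (a₁ s) * ev n (a₂ u) * ev l (a₃ (g (s, u))) - ev n (a₁ s) * ev l (a₂ u) * ev m (a₃ (g (s, u)))) := fun s hs u hu =>
      tri_eq (lA s hs) (mB u hu) (nC s hs u hu) (r₁ s hs u hu)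
    have t₂ : ∀ s ∈ I, ∀ u ∈ J,
      2 * ev m (a₃ (g (s, u))) * ev m (a₁ s) * (ev n (a₂ u) * evd l (v₂ u) - ev l (a₂ u) * evd n (v₂ u))
      = evd m (v₂ u) * (ev n (a₂ u) * ev l (a₃ (g (s, u))) * ev m (a₁ s) - ev l (a₂ u) * ev m (a₃ (g (s, u))) * ev n (a₁ s)) := fun s hs u hu =>
      tri_eq (mB u hu) (nC s hs u hu) (lA s hs) (by linarith [r₂ s hs u hu])
    have t₃ : ∀ s ∈ I, ∀ u ∈ J,
      2 * ev n (a₁ s) * ev n (a₂ u) * (ev l (a₃ (g (s, u))) * evd m (v₃ (g (s, u))) - ev m (a₃ (g (s, u))) * evd l (v₃ (g (s, u))))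
      = evd n (v₃ (g (s, u))) * (ev l (a₃ (g (s, u))) * ev m (a₁ s) * ev n (a₂ u) - ev m (a₃ (g (s, u))) * ev n (a₁ s) * ev l (a₂ u)) := fun s hs u hu =>
      tri_eq (nC s hs u hu) (lA s hs) (mB u hu) (r₃ s hs u hu)
    have hz := comb_tri (I := I) (J := J) (α := fun s => ev n (a₁ s) / ev m (a₁ s))
      (β := fun u => ev l (a₂ u) / ev n (a₂ u))
      (γ := fun s u => ev m (a₃ (g (s, u))) / ev l (a₃ (g (s, u))))
      (m := fun s => 2 * (ev m (a₁ s) * evd n (v₁ s) - ev n (a₁ s) * evd m (v₁ s))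
        / (evd l (v₁ s) * ev m (a₁ s)))
      (n := fun u => 2 * (ev n (a₂ u) * evd l (v₂ u) - ev l (a₂ u) * evd n (v₂ u))
        / (evd m (v₂ u) * ev n (a₂ u)))
      (fun s hs => div_ne_zero (nA s hs) (mA s hs)) (fun u hu => div_ne_zero (lB u hu) (nB u hu))
      (by
        intro s hs u hu
        have := t₁ s hs u hu
        have := mA s hs
        have := nB u hu
        have := lC s hs u hu
        have := lV s hs
        field_simp
        linarith)
      (by
        intro s hs u hu
        have := t₂ s hs u hu
        have := mA s hs
        have := nB u hu
        have := lC s hs u hu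
        have := mV u hu
        field_simp
        linarith)
      hs₀ hs₁ hu₀ hu₁
      (by
        intro h
        have := mA s₀ hs₀
        have := mA s₁ hs₁
        refine hA₀₁ (inj_id hD (lA s₀ hs₀) (lA s₁ hs₁) (mA s₀ hs₀) ?_)
        rw [div_eq_div_iff (mA _ hs₀) (mA _ hs₁)] at h
        linarith)
      (by
        intro h
        refine hB₀₁ (inj_id hD2 (mB u₀ hu₀) (mB u₁ hu₁) (nB u₀ hu₀) ?_)
        rw [div_eq_div_iff (nB _ hu₀) (nB _ hu₁)] at h
        linarith)
    have z₁ : ∀ s ∈ I, ev m (a₁ s) * evd n (v₁ s) - ev n (a₁ s) * evd m (v₁ s) = 0 := by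
      intro s hs
      have h := hz s hs
      simp only [div_eq_zero_iff, mul_eq_zero, lV s hs, mA s hs, or_false, OfNat.ofNat_ne_zero,
        false_or] at h
      exact h
    have zX : ∀ s ∈ I, ∀ u ∈ J, ev m (a₁ s) * ev n (a₂ u) * ev l (a₃ (g (s, u)))
        - ev n (a₁ s) * ev l (a₂ u) * ev m (a₃ (g (s, u))) = 0 := by
      intro s hs u hu
      have h := t₁ s hs u hu
      rw [z₁ s hs, mul_zero] at h
      exact (mul_eq_zero.1 h.symm).resolve_left (lV s hs)
    refine ⟨crs n l, crs l m, crs m n, crs_indep hD, I ×ˢ J, hball, ⟨(s₀, u₀), hs₀, hu₀⟩,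
      hIo.prod hJo, ?_⟩
    rintro ⟨s, u⟩ ⟨hs, hu⟩
    refine ⟨pt_mem hD (lA s hs), pt_mem hD2 (mB u hu), pt_mem hD3 (nC s hs u hu),
      vert_mem (lA s hs) (mA s hs) (lV s hs) (z₁ s hs),
      vert_mem (mB u hu) (nB u hu) (mV u hu) ?_,
      vert_mem (nC s hs u hu) (lC s hs u hu) (nV s hs u hu) ?_⟩
    · have h := t₂ s hs u hu
      have h' : 2 * ev m (a₃ (g (s, u))) * ev m (a₁ s) *
          (ev n (a₂ u) * evd l (v₂ u) - ev l (a₂ u) * evd n (v₂ u)) = 0 := by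
        linear_combination h + evd m (v₂ u) * zX s hs u hu
      simpa [mC s hs u hu, mA s hs] using h'
    · have h := t₃ s hs u hu
      have h' : 2 * ev n (a₁ s) * ev n (a₂ u) *
          (ev l (a₃ (g (s, u))) * evd m (v₃ (g (s, u)))
            - ev m (a₃ (g (s, u))) * evd l (v₃ (g (s, u)))) = 0 := by
        linear_combination h + evd n (v₃ (g (s, u))) * zX s hs u hu
      simpa [nA s hs, nB u hu] using h'
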